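/- Let R = k[x_1,...,x_n] and let p, q ⊆ R be prime ideals with p ⊄ q. Set i = height(p) and j = height(q). Then Hom_R(H^i_p(R), H^j_q(R)) = 0. -/

import Mathlib

open MvPolynomial

/-- The height of an ideal: the infimum of the heights (in the prime spectrum) of the
minimal primes over it. -/
noncomputable def idealHeight {R : Type*} [CommRing R] (I : Ideal R) : ℕ∞ :=
  ⨅ p : {p : Ideal R // p ∈ I.minimalPrimes},
    Order.height (⟨p.1, p.2.1.1⟩ : PrimeSpectrum R)

section Part1
open LinearMap RingTheory.Sequence Ideal CategoryTheory Abelian Limits Pointwise IsSMulRegular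

def CMProp (A : Type) [CommRing A] : Prop :=
  ∀ p : Ideal A, p.IsPrime → ∃ rs : List A, (rs.length : ℕ∞) = p.height ∧ (∀ r ∈ rs, r ∈ p) ∧
    IsWeaklyRegular A rs

lemma hom_quot_zero {A : Type} [CommRing A] (N : ModuleCat.{0} A) (rs : List A) :
    ∀ (M : ModuleCat.{0} A), IsWeaklyRegular M rs →
    (∀ i ≤ rs.length, Subsingleton (Ext N M i)) →
    Subsingleton (N →ₗ[A] (M ⧸ (Ideal.ofList rs • ⊤ : Submodule A M))) := by
  induction rs with
  | nil =>
    intro M _ h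
    have := h 0 (by simp)
    have h1 : Subsingleton (N →ₗ[A] M) :=
      (Ext.addEquiv₀.trans ModuleCat.homAddEquiv).symm.subsingleton
    have e : (M ⧸ (Ideal.ofList [] • ⊤ : Submodule A M)) ≃ₗ[A] M :=
      Submodule.quotEquivOfEqBot _ ((congrArg (· • (⊤ : Submodule A M)) Ideal.ofList_nil).trans (Submodule.bot_smul ⊤))
    refine ⟨fun f g => ?_⟩
    ext x
    apply e.injective
    exact LinearMap.congr_fun (Subsingleton.elim (e.toLinearMap ∘ₗ f) (e.toLinearMap ∘ₗ g)) x
  | cons a rs ih =>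
    intro M hM h
    rw [isWeaklyRegular_cons_iff] at hM
    have := ih (ModuleCat.of A (QuotSMulTop a M)) hM.2 (fun i hi => by
      have zero1 := AddCommGrpCat.isZero_of_iff_subsingleton.mpr (h i (by simp; omega))
      have zero2 := AddCommGrpCat.isZero_of_iff_subsingleton.mpr (h (i + 1) (by simp; omega))
      exact AddCommGrpCat.subsingleton_of_isZero <| ShortComplex.Exact.isZero_of_both_zeros
        ((Ext.covariant_sequence_exact₃' N hM.1.smulShortComplex_shortExact) i (i + 1) rfl)
        (zero1.eq_zero_of_src _) (zero2.eq_zero_of_tgt _))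
    let e := Submodule.quotOfListConsSMulTopEquivQuotSMulTopInner M a rs
    refine ⟨fun f g => ?_⟩
    ext x
    apply e.injective
    exact LinearMap.congr_fun (Subsingleton.elim (e.toLinearMap ∘ₗ f) (e.toLinearMap ∘ₗ g)) x

lemma ext_quot_prime_zero {A : Type} [CommRing A] [IsNoetherianRing A] (hA : CMProp A)
    (Q : Ideal A) [hQ : Q.IsPrime] (N : ModuleCat.{0} A) [Module.Finite A N]
    (hN : Module.support A N ⊆ PrimeSpectrum.zeroLocus Q) (i : ℕ) (hi : (i : ℕ∞) < Q.height) :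
    Subsingleton (Ext N (ModuleCat.of A A) i) := by
  obtain ⟨rs, hlen, hmem, hreg⟩ := hA Q hQ
  refine ModuleCat.subsingleton_ext_of_exists_isRegular Q N hN (ModuleCat.of A A) ?_ rs hmem ?_ i ?_
  · have := hQ.ne_top
    rw [lt_top_iff_ne_top]
    intro h
    apply this
    have h2 : (Q • ⊤ : Ideal A) = ⊤ := h
    simpa using h2
  · refine ⟨hreg, ?_⟩
    intro h
    have h1 : Ideal.ofList rs ≤ Q := Ideal.span_le.mpr hmem
    apply hQ.ne_top
    rw [eq_top_iff]
    refine le_trans ?_ h1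
    have : (⊤ : Ideal A) = Ideal.ofList rs • ⊤ := h
    rw [this]
    simp
  · rw [← hlen] at hi
    exact_mod_cast hi

lemma unmixed {A : Type} [CommRing A] [IsNoetherianRing A] (hA : CMProp A) (rs : List A)
    (hrs : IsWeaklyRegular A rs) (Q : Ideal A) (hQ : Q ∈ associatedPrimes A (A ⧸ Ideal.ofList rs)) :
    Q.height ≤ rs.length := by
  by_contra! hlt
  have hQp : Q.IsPrime := hQ.isPrime
  have h1 := hom_quot_zero (ModuleCat.of A (A ⧸ Q)) rs (ModuleCat.of A A) hrs (fun i hi =>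
    ext_quot_prime_zero hA Q _ (by
      change Module.support A (A ⧸ Q) ⊆ _
      rw [Module.support_eq_zeroLocus, annihilator_quotient]) i (lt_of_le_of_lt (by exact_mod_cast hi) hlt))
  have h2 : Subsingleton ((A ⧸ Q) →ₗ[A] (A ⧸ Ideal.ofList rs)) := by
    have e : (A ⧸ (Ideal.ofList rs • ⊤ : Submodule A A)) ≃ₗ[A] (A ⧸ Ideal.ofList rs) :=
      Submodule.quotEquivOfEq _ _ (by simp)
    refine ⟨fun f g => ?_⟩
    ext
    apply e.symm.injective
    exact LinearMap.congr_fun (h1.elim (e.symm.toLinearMap ∘ₗ f) (e.symm.toLinearMap ∘ₗ g)) 1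
  obtain ⟨_, f, hf⟩ := (isAssociatedPrime_iff_exists_injective_linearMap _ _).mp hQ
  have : f 1 = f 0 := by rw [Subsingleton.elim f 0]; simp
  have h01 := hf this
  have : Nontrivial (A ⧸ Q) := Ideal.Quotient.nontrivial_iff.mpr hQp.ne_top
  exact one_ne_zero h01

open Polynomial in
lemma height_map_C_prime {A : Type} [CommRing A] [IsNoetherianRing A] (p : Ideal A) [p.IsPrime] :
    (p.map (Polynomial.C : A →+* A[X])).height = p.height := by
  have : (p.map (Polynomial.C : A →+* A[X])).LiesOver p := ⟨by
    ext x
    simp only [Ideal.under_def, Ideal.mem_comap, Polynomial.algebraMap_eq, Ideal.mem_map_C_iff]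
    constructor
    · intro hx n
      rw [Polynomial.coeff_C]; split_ifs
      · exact hx
      · simp
    · intro h; simpa using h 0⟩
  have : (p.map (Polynomial.C : A →+* A[X])).IsPrime := inferInstance
  simp [height_eq_height_add_of_liesOver_of_hasGoingDown p]

open Polynomial IsLocalization in
attribute [local instance] Polynomial.algebra Polynomial.isLocalization in
lemma height_le_add_one {A : Type} [CommRing A] [IsNoetherianRing A] (p : Ideal A)
    (P : Ideal A[X]) [P.IsPrime] [P.LiesOver p] : P.height ≤ p.height + 1 := by
  have : p.IsPrime := by rw [P.over_def p]; infer_instance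
  let Rₚ := Localization.AtPrime p
  set p' : Ideal Rₚ := p.map (algebraMap A Rₚ) with p'_def
  have : p'.IsMaximal := by
    rw [p'_def, Localization.AtPrime.map_eq_maximalIdeal]
    exact IsLocalRing.maximalIdeal.isMaximal Rₚ
  let P' : Ideal Rₚ[X] := P.map (algebraMap A[X] Rₚ[X])
  have disj : Disjoint (p.primeCompl.map (Polynomial.C : A →+* A[X]) : Set A[X]) P := by
    refine Set.disjoint_left.mpr fun a ⟨b, hb⟩ ha ↦ hb.1 ?_
    rwa [SetLike.mem_coe, LiesOver.over (P := P) (p := p), mem_comap, Polynomial.algebraMap_eq, hb.2]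
  have hP' : P'.IsPrime := IsLocalization.isPrime_of_isPrime_disjoint (p.primeCompl.map (Polynomial.C : A →+* A[X])) _ _ ‹_› disj
  have hlies : P'.LiesOver p' := liesOver_of_isPrime_of_disjoint p.primeCompl _ _ disj
  have eq1 : p.height = p'.height := by
    rw [height_map_of_disjoint p.primeCompl]
    exact Disjoint.symm <| Set.disjoint_left.mpr fun _ a b ↦ b a
  have eq2 : P.height = P'.height := by
    rw [height_map_of_disjoint (Submonoid.map (Polynomial.C : A →+* A[X]) <| p.primeCompl) _ disj]
  rw [eq1, eq2]
  obtain ⟨M, hM, hle⟩ := Ideal.exists_le_maximal P' hP'.ne_top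
  have : M.LiesOver p' := ⟨by
    apply IsMaximal.eq_of_le inferInstance Ideal.IsPrime.ne_top'
    rw [hlies.over]
    exact Ideal.comap_mono hle⟩
  rw [← Polynomial.height_eq_height_add_one p' M]
  exact Ideal.height_mono hle

open Polynomial in
/-- an element outside all `Q[X]`, `Q` associated to `A/J`, is regular mod `J[X]`. -/
lemma regular_mod {A : Type} [CommRing A] [IsNoetherianRing A] (J : Ideal A) (f : A[X])
    (hf : ∀ Q ∈ associatedPrimes A (A ⧸ J), f ∉ Q.map (Polynomial.C : A →+* A[X])) :
    ∀ g : A[X], f * g ∈ J.map (Polynomial.C : A →+* A[X]) → g ∈ J.map (Polynomial.C : A →+* A[X]) := by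
  intro g hg
  let φ := Polynomial.mapRingHom (Ideal.Quotient.mk J)
  have hφ : ∀ g, g ∈ J.map (Polynomial.C : A →+* A[X]) ↔ φ g = 0 := by
    intro g
    rw [Ideal.mem_map_C_iff]
    simp [φ, Polynomial.ext_iff, Ideal.Quotient.eq_zero_iff_mem]
  have hreg : φ f ∈ nonZeroDivisors (A ⧸ J)[X] := by
    by_contra hn
    obtain ⟨b, hb, hbf⟩ := Polynomial.notMem_nonZeroDivisors_iff.mp hn
    obtain ⟨Q, hQ, hle⟩ := exists_le_isAssociatedPrime_of_isNoetherianRing A b hb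
    refine hf Q hQ ?_
    rw [Ideal.mem_map_C_iff]
    intro n
    apply hle
    have := congrArg (fun t => t.coeff n) hbf
    simp [φ] at this
    simp [Algebra.smul_def, mul_comm, this]
  rw [hφ, map_mul] at hg
  rw [hφ]
  exact (mem_nonZeroDivisors_iff.mp hreg).1 _ hg

end Part1

section Part2
open LinearMap RingTheory.Sequence Ideal CategoryTheory Abelian Limits Pointwise IsSMulRegular

open Polynomial in
lemma CMProp.polynomial {A : Type} [CommRing A] [IsNoetherianRing A] (hA : CMProp A) :
    CMProp A[X] := by
  intro P hP
  let p : Ideal A := P.comap Polynomial.C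
  have hp : p.IsPrime := Ideal.comap_isPrime _ _
  have hover : P.LiesOver p := ⟨rfl⟩
  obtain ⟨rs, hlen, hmem, hreg⟩ := hA p hp
  have hreg' : IsWeaklyRegular A[X] (rs.map (Polynomial.C : A →+* A[X])) := hreg.of_flat
  have hmem' : ∀ r ∈ rs.map (Polynomial.C : A →+* A[X]), r ∈ P := by
    intro r hr
    obtain ⟨a, ha, rfl⟩ := List.mem_map.mp hr
    exact hmem a ha
  have hle : p.map (Polynomial.C : A →+* A[X]) ≤ P := Ideal.map_comap_le
  by_cases hPp : P ≤ p.map (Polynomial.C : A →+* A[X])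
  · refine ⟨rs.map (Polynomial.C : A →+* A[X]), ?_, hmem', hreg'⟩
    rw [le_antisymm hPp hle, height_map_C_prime, List.length_map, hlen]
  · have hfin := associatedPrimes.finite A (A ⧸ Ideal.ofList rs)
    obtain ⟨f, hfP, hf⟩ : ∃ f ∈ P, ∀ Q ∈ associatedPrimes A (A ⧸ Ideal.ofList rs),
        f ∉ Q.map (Polynomial.C : A →+* A[X]) := by
      by_contra! hcon
      have hsub : (P : Set A[X]) ⊆ ⋃ Q ∈ associatedPrimes A (A ⧸ Ideal.ofList rs),
          ((Q.map (Polynomial.C : A →+* A[X]) : Ideal A[X]) : Set A[X]) := by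
        intro f hf
        obtain ⟨Q, hQ, hfQ⟩ := hcon f hf
        exact Set.mem_biUnion hQ hfQ
      rw [Ideal.subset_union_prime_finite hfin ⊥ ⊥ (fun Q hQ _ _ => by
        have := hQ.isPrime
        infer_instance)] at hsub
      obtain ⟨Q, hQ, hPQ⟩ := hsub
      have hQp : Q.IsPrime := hQ.isPrime
      have hpQ : p ≤ Q := by
        intro a ha
        have h1 : (Polynomial.C a : A[X]) ∈ Q.map (Polynomial.C : A →+* A[X]) := hPQ ha
        rw [Ideal.mem_map_C_iff] at h1
        simpa using h1 0
      have hht := unmixed hA rs hreg Q hQ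
      rw [hlen] at hht
      have : p = Q := by
        by_contra hne
        have hlt := Ideal.height_strict_mono_of_isPrime (lt_of_le_of_ne hpQ hne)
        exact absurd hht (not_le.mpr hlt)
      exact hPp (this ▸ hPQ)
    have hregf : IsWeaklyRegular A[X] (rs.map (Polynomial.C : A →+* A[X]) ++ [f]) := by
      rw [isWeaklyRegular_append_iff]
      refine ⟨hreg', ?_⟩
      rw [isWeaklyRegular_singleton_iff]
      rw [← Ideal.map_ofList]
      have hN : ((Ideal.ofList rs).map (Polynomial.C : A →+* A[X]) • ⊤ : Submodule A[X] A[X]) =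
        (Ideal.ofList rs).map (Polynomial.C : A →+* A[X]) := by simp
      rw [hN]
      rw [isSMulRegular_iff_right_eq_zero_of_smul]
      intro g
      obtain ⟨g, rfl⟩ := Ideal.Quotient.mk_surjective g
      intro hg
      have h2 : Ideal.Quotient.mk ((Ideal.ofList rs).map (Polynomial.C : A →+* A[X])) (f * g) = 0 := hg
      rw [Ideal.Quotient.eq_zero_iff_mem] at h2
      exact Ideal.Quotient.eq_zero_iff_mem.mpr (regular_mod _ f hf g h2)
    have hmemf : ∀ r ∈ rs.map (Polynomial.C : A →+* A[X]) ++ [f], r ∈ P := by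
      intro r hr
      rcases List.mem_append.mp hr with h | h
      · exact hmem' r h
      · rw [List.mem_singleton.mp h]; exact hfP
    refine ⟨_, ?_, hmemf, hregf⟩
    apply le_antisymm
    · have hlt := Ideal.height_strict_mono_of_isPrime (lt_of_le_not_ge hle hPp)
      rw [height_map_C_prime, ← hlen] at hlt
      simpa using Order.add_one_le_of_lt hlt
    · refine (height_le_add_one p P).trans ?_
      simp [hlen]

lemma CMProp.field (k : Type) [Field k] : CMProp k := by
  intro p hp
  refine ⟨[], ?_, by simp, by simp⟩
  have : p = ⊥ := (Ideal.eq_bot_or_top p).resolve_right hp.ne_top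
  subst this
  simp

lemma CMProp.equiv {A B : Type} [CommRing A] [CommRing B] (e : A ≃+* B) (hA : CMProp A) :
    CMProp B := by
  intro p hp
  obtain ⟨rs, hlen, hmem, hreg⟩ := hA (p.comap e) (Ideal.comap_isPrime _ _)
  refine ⟨rs.map e, ?_, ?_, ?_⟩
  · rw [List.length_map, hlen, e.height_comap]
  · intro r hr
    obtain ⟨a, ha, rfl⟩ := List.mem_map.mp hr
    exact hmem a ha
  · refine (e.toAddEquiv.isWeaklyRegular_congr (as := rs) ?_).mp hreg
    rw [List.forall₂_map_right_iff, List.forall₂_same]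
    intro r _ x
    simp

lemma CMProp.mvPolynomial (k : Type) [Field k] (n : ℕ) : CMProp (MvPolynomial (Fin n) k) := by
  induction n with
  | zero => exact (CMProp.field k).equiv (MvPolynomial.isEmptyRingEquiv k (Fin 0)).symm
  | succ n ih => exact ih.polynomial.equiv (MvPolynomial.finSuccEquiv k n).toRingEquiv.symm

end Part2

section Part3
open LinearMap RingTheory.Sequence Ideal CategoryTheory Abelian Limits Pointwise IsSMulRegular

lemma ses_of {A : Type} [CommRing A] {N₁ N₂ N₃ : Type} [AddCommGroup N₁] [AddCommGroup N₂]
    [AddCommGroup N₃] [Module A N₁] [Module A N₂] [Module A N₃] (f : N₁ →ₗ[A] N₂) (g : N₂ →ₗ[A] N₃)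
    (hf : Function.Injective f) (hg : Function.Surjective g) (hfg : Function.Exact f g) :
    (ModuleCat.shortComplexOfCompEqZero f g hfg.linearMap_comp_eq_zero).ShortExact :=
  ModuleCat.shortComplex_shortExact _ hfg hf hg

lemma ext_vanish {A : Type} [CommRing A] [IsNoetherianRing A] (hA : CMProp A) (j : ℕ)
    (N : Type) [AddCommGroup N] [Module A N] (hN : Module.Finite A N)
    (hs : ∀ P ∈ Module.support A N, (j : ℕ∞) < P.asIdeal.height) :
    ∀ i ≤ j, Subsingleton (Ext (ModuleCat.of A N) (ModuleCat.of A A) i) := by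
  induction hN using IsNoetherianRing.induction_on_isQuotientEquivQuotientPrime A with
  | subsingleton N =>
    intro i _
    have : IsZero (ModuleCat.of A N) := ModuleCat.isZero_of_subsingleton _
    refine ⟨fun x y => ?_⟩
    rw [← Ext.mk₀_id_comp x, ← Ext.mk₀_id_comp y, this.eq_of_src (𝟙 _) 0, Ext.mk₀_zero]
    simp
  | quotient N P e =>
    intro i hi
    have hsupp : Module.support A N = PrimeSpectrum.zeroLocus P.asIdeal := by
      rw [e.support_eq, Module.support_eq_zeroLocus, annihilator_quotient]
    refine ext_quot_prime_zero hA P.asIdeal _ hsupp.subset i ?_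
    refine lt_of_le_of_lt (by exact_mod_cast hi) (hs P ?_)
    rw [hsupp]
    exact le_refl (P.asIdeal : Set A)
  | exact N₁ N₂ N₃ f g hf hg hfg h₁ h₃ =>
    intro i hi
    have hsupp := Module.support_of_exact hfg hf hg
    have h1 := h₁ (fun P hP => hs P (hsupp ▸ Or.inl hP)) i hi
    have h3 := h₃ (fun P hP => hs P (hsupp ▸ Or.inr hP)) i hi
    have hS := ses_of f g hf hg hfg
    refine subsingleton_of_forall_eq 0 fun x => ?_
    obtain ⟨y, hy⟩ := Ext.contravariant_sequence_exact₂ hS (ModuleCat.of A A) x (h1.elim _ _)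
    rw [← hy, h3.elim y 0, Ext.comp_zero]

lemma ext_vanish_of_killed {A : Type} [CommRing A] [IsNoetherianRing A] (hA : CMProp A) (j : ℕ)
    (q : Ideal A) (hq : q.IsPrime) (hj : q.height = j) (s : A) (hs : s ∉ q) (t : ℕ)
    (N : Type) [AddCommGroup N] [Module A N] [Module.Finite A N]
    (h1 : q ^ t ≤ Module.annihilator A N) (h2 : s ∈ Module.annihilator A N) :
    ∀ i ≤ j, Subsingleton (Ext (ModuleCat.of A N) (ModuleCat.of A A) i) := by
  apply ext_vanish hA j N ‹_›
  intro P hP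
  rw [Module.support_eq_zeroLocus] at hP
  have hP' : Module.annihilator A N ≤ P.asIdeal := hP
  have hqP : q ≤ P.asIdeal := Ideal.IsPrime.le_of_pow_le (h1.trans hP')
  rw [← hj]
  apply Ideal.height_strict_mono_of_isPrime
  refine lt_of_le_of_ne hqP ?_
  intro h
  exact hs (h ▸ hP' h2)

lemma ext_smul_regular {A : Type} [CommRing A] [IsNoetherianRing A] (hA : CMProp A) (m : ℕ)
    (q : Ideal A) (hq : q.IsPrime) (hj : q.height = (m + 1 : ℕ)) (s : A) (hs : s ∉ q) (t : ℕ)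
    (N : Type) [AddCommGroup N] [Module A N] [Module.Finite A N]
    (h1 : q ^ t ≤ Module.annihilator A N)
    (e : Ext (ModuleCat.of A N) (ModuleCat.of A A) (m + 1)) (he : s • e = 0) : e = 0 := by
  let φ : N →ₗ[A] N := LinearMap.lsmul A N s
  have hK := ext_vanish_of_killed hA (m + 1) q hq hj s hs t (LinearMap.ker φ) 
    (h1.trans ((LinearMap.ker φ).subtype.annihilator_le_of_injective Subtype.val_injective))
    (Module.mem_annihilator.mpr fun x => Subtype.ext x.2) m (by omega)
  have hC := ext_vanish_of_killed hA (m + 1) q hq hj s hs t (N ⧸ LinearMap.range φ) 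
    (h1.trans ((LinearMap.range φ).mkQ.annihilator_le_of_surjective (Submodule.mkQ_surjective _)))
    (Module.mem_annihilator.mpr fun x => by
      obtain ⟨x, rfl⟩ := Submodule.mkQ_surjective _ x
      rw [← map_smul]
      exact (Submodule.Quotient.mk_eq_zero _).mpr ⟨x, rfl⟩) (m + 1) le_rfl
  have hS1 := ses_of (LinearMap.ker φ).subtype φ.rangeRestrict Subtype.val_injective
    φ.surjective_rangeRestrict (by
      rw [LinearMap.exact_iff, Submodule.range_subtype, LinearMap.ker_rangeRestrict])
  have hS2 := ses_of (LinearMap.range φ).subtype (LinearMap.range φ).mkQ Subtype.val_injective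
    (Submodule.mkQ_surjective _) (by
      rw [LinearMap.exact_iff, Submodule.range_subtype, Submodule.ker_mkQ])
  have hfac : s • 𝟙 (ModuleCat.of A N) =
      ModuleCat.ofHom φ.rangeRestrict ≫ ModuleCat.ofHom (LinearMap.range φ).subtype := rfl
  have h0 : (Ext.mk₀ (ModuleCat.ofHom φ.rangeRestrict)).comp
      ((Ext.mk₀ (ModuleCat.ofHom (LinearMap.range φ).subtype)).comp e (zero_add _)) (zero_add _)
      = 0 := by
    rw [Ext.mk₀_comp_mk₀_assoc, ← hfac, Ext.mk₀_smul, Ext.smul_comp, Ext.mk₀_id_comp, he]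
  obtain ⟨y, hy⟩ := Ext.contravariant_sequence_exact₃ hS1 (ModuleCat.of A A) _ h0 (add_comm 1 m)
  rw [hK.elim y 0, Ext.comp_zero] at hy
  obtain ⟨z, hz⟩ := Ext.contravariant_sequence_exact₂ hS2 (ModuleCat.of A A) _ hy.symm
  rw [← hz, hC.elim z 0, Ext.comp_zero]

end Part3

section Part4
open CategoryTheory Limits

lemma homology_rep {A : Type} [CommRing A] (K : CochainComplex (ModuleCat.{0} A) ℕ) (n : ℕ)
    (x : K.homology n) :
    ∃ f : K.X n, K.d n (n + 1) f = 0 ∧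
      ∀ r : A, r • x = 0 ↔ ∃ g : K.X ((ComplexShape.up ℕ).prev n), K.d _ n g = r • f := by
  have hsurj : Function.Surjective (K.homologyπ n) := (ModuleCat.epi_iff_surjective _).mp inferInstance
  have hinj : Function.Injective (K.iCycles n) := (ModuleCat.mono_iff_injective _).mp inferInstance
  obtain ⟨z, rfl⟩ := hsurj x
  refine ⟨K.iCycles n z, ?_, ?_⟩
  · have := ConcreteCategory.congr_hom (K.iCycles_d n (n + 1)) z
    exact this
  · intro r
    rw [← map_smul, ← map_smul]
    have hex := ShortComplex.exact_of_g_is_cokernel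
      (ShortComplex.mk (K.toCycles _ n) (K.homologyπ n) (K.toCycles_comp_homologyπ _ n))
      (K.homologyIsCokernel _ n rfl)
    rw [ShortComplex.ShortExact.moduleCat_exact_iff_function_exact] at hex
    have h1 := hex (r • z)
    refine h1.trans ?_
    constructor
    · rintro ⟨g, hg⟩
      refine ⟨g, ?_⟩
      rw [← K.toCycles_i _ n]
      exact congrArg (K.iCycles n) hg
    · rintro ⟨g, hg⟩
      refine ⟨g, hinj ?_⟩
      rw [← hg, ← K.toCycles_i _ n]
      rfl

/-- Old Ext classes are represented by cocycles in a projective resolution. -/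
lemma oldExt_rep {A : Type} [CommRing A] (X Y : ModuleCat.{0} A) (P : ProjectiveResolution X) (n : ℕ)
    (x : ((Ext A (ModuleCat.{0} A) n).obj (Opposite.op X)).obj Y) :
    ∃ f : P.complex.X n ⟶ Y, P.complex.d (n + 1) n ≫ f = 0 ∧
      ∀ r : A, r • x = 0 ↔ ∃ g : P.complex.X ((ComplexShape.up ℕ).prev n) ⟶ Y,
        P.complex.d n _ ≫ g = r • f := by
  let e := (P.isoExt (R := A) n Y).toLinearEquiv
  obtain ⟨f, hf, h⟩ := homology_rep (P.complex.linearYonedaObj A Y) n (e x)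
  refine ⟨f, hf, fun r => ?_⟩
  have h1 := h r
  rw [← map_smul, LinearEquiv.map_eq_zero_iff] at h1
  exact h1

lemma extMk_smul {A : Type} [CommRing A] {X Y : ModuleCat.{0} A} (P : ProjectiveResolution X)
    (n : ℕ) (f : P.complex.X n ⟶ Y) (hf : P.complex.d (n + 1) n ≫ f = 0) (r : A) :
    P.extMk (r • f) (n + 1) rfl (by rw [Linear.comp_smul, hf, smul_zero]) =
      r • P.extMk f (n + 1) rfl hf := by
  rw [Abelian.Ext.smul_eq_comp_mk₀, ProjectiveResolution.extMk_comp_mk₀]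
  congr 1

/-- Comparison of vanishing in positive degree. -/
lemma oldExt_succ_rep {A : Type} [CommRing A] (X Y : ModuleCat.{0} A) (m : ℕ)
    (x : ((Ext A (ModuleCat.{0} A) (m + 1)).obj (Opposite.op X)).obj Y) :
    ∃ y : Abelian.Ext X Y (m + 1), ∀ r : A, r • x = 0 ↔ r • y = 0 := by
  let P := projectiveResolution X
  obtain ⟨f, hf, h⟩ := oldExt_rep X Y P (m + 1) x
  refine ⟨P.extMk f (m + 1 + 1) rfl hf, fun r => ?_⟩
  rw [h, ← extMk_smul, P.extMk_eq_zero_iff _ _ _ _ m rfl, CochainComplex.prev_nat_succ]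

lemma oldExt_zero_rep {A : Type} [CommRing A] (X Y : ModuleCat.{0} A)
    (x : ((Ext A (ModuleCat.{0} A) 0).obj (Opposite.op X)).obj Y) :
    ∃ y : X ⟶ Y, ∀ r : A, r • x = 0 ↔ r • y = 0 := by
  let P := projectiveResolution X
  obtain ⟨f, hf, h⟩ := oldExt_rep X Y P 0 x
  have hex := P.exact₀
  have : Epi (P.π.f 0) := inferInstance
  let π : P.complex.X 0 ⟶ X := P.π.f 0
  have hπ : Epi π := this
  let y : X ⟶ Y := hex.desc f hf
  have hy : π ≫ y = f := hex.g_desc f hf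
  refine ⟨y, fun r => ?_⟩
  rw [h, ← cancel_epi π, Linear.comp_smul, hy, comp_zero]
  rw [P.complex.shape _ _ (by simp)]
  constructor
  · rintro ⟨g, hg⟩
    rw [← hg, zero_comp]
  · intro h0
    exact ⟨0, by rw [h0, zero_comp]⟩

lemma oldExt_annihilate {A : Type} [CommRing A] (X Y : ModuleCat.{0} A) (n : ℕ)
    (x : ((Ext A (ModuleCat.{0} A) n).obj (Opposite.op X)).obj Y) (r : A)
    (hr : r ∈ Module.annihilator A X) : r • x = 0 := by
  have h0 : r • 𝟙 X = 0 := by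
    ext x
    exact Module.mem_annihilator.mp hr x
  cases n with
  | zero =>
    obtain ⟨y, hy⟩ := oldExt_zero_rep X Y x
    rw [hy, ← Category.id_comp y, ← Linear.smul_comp, h0, zero_comp]
  | succ m =>
    obtain ⟨y, hy⟩ := oldExt_succ_rep X Y m x
    rw [hy, ← Abelian.Ext.mk₀_id_comp y, ← Abelian.Ext.smul_comp, ← Abelian.Ext.mk₀_smul, h0]
    simp

lemma oldExt_regular {A : Type} [CommRing A] [IsDomain A] [IsNoetherianRing A] (hA : CMProp A)
    (j : ℕ) (q : Ideal A) (hq : q.IsPrime) (hj : q.height = j) (s : A) (hs : s ∉ q) (t : ℕ)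
    (X : ModuleCat.{0} A) [Module.Finite A X] (h1 : q ^ t ≤ Module.annihilator A X)
    (x : ((Ext A (ModuleCat.{0} A) j).obj (Opposite.op X)).obj (ModuleCat.of A A))
    (hx : s • x = 0) : x = 0 := by
  rw [← one_smul A x]
  cases j with
  | zero =>
    obtain ⟨y, hy⟩ := oldExt_zero_rep X _ x
    rw [hy] at hx ⊢
    ext z
    have h2 : s * (y.hom z : A) = 0 := congrArg (fun t => t.hom z) hx
    have hs0 : s ≠ 0 := fun h => hs (h ▸ q.zero_mem)
    have h3 : (y.hom z : A) = 0 := (mul_eq_zero.mp h2).resolve_left hs0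
    rw [one_smul]
    exact h3
  | succ m =>
    obtain ⟨y, hy⟩ := oldExt_succ_rep X _ m x
    rw [hy] at hx ⊢
    rw [one_smul]
    exact ext_smul_regular hA m q hq hj s hs t X h1 y hx

end Part4

section LC
open CategoryTheory Limits

lemma idealHeight_prime {R : Type} [CommRing R] (q : Ideal R) (hq : q.IsPrime) :
    idealHeight q = q.height := by
  rw [PrimeSpectrum.height_eq_orderHeight ⟨q, hq⟩]
  unfold idealHeight
  apply le_antisymm
  · exact iInf_le (fun p : {p : Ideal R // p ∈ q.minimalPrimes} =>
      Order.height (⟨p.1, p.2.1.1⟩ : PrimeSpectrum R))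
      ⟨q, by rw [Ideal.minimalPrimes_eq_subsingleton_self]; rfl⟩
  · refine le_iInf fun p => ?_
    apply Order.height_mono
    exact p.2.1.2

lemma localCohomology_rep {A : Type} [CommRing A] (J : Ideal A) (i : ℕ) (M : ModuleCat.{0} A)
    (x : (localCohomology J i).obj M) :
    ∃ (t : (ℕᵒᵖ)ᵒᵖ) (ι : ∀ t, ((localCohomology.diagram (localCohomology.idealPowersDiagram J) i).obj t).obj M ⟶
        (localCohomology J i).obj M)
      (y : ((localCohomology.diagram (localCohomology.idealPowersDiagram J) i).obj t).obj M),
      ι t y = x ∧ ∀ z : ((localCohomology.diagram (localCohomology.idealPowersDiagram J) i).obj t).obj M,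
        ι t z = 0 → ∃ (t' : (ℕᵒᵖ)ᵒᵖ) (g : t ⟶ t'),
        (∀ w, ι t' (((localCohomology.diagram (localCohomology.idealPowersDiagram J) i).map g).app M w)
          = ι t w) ∧
        ((localCohomology.diagram (localCohomology.idealPowersDiagram J) i).map g).app M z = 0 := by
  let F := localCohomology.diagram (localCohomology.idealPowersDiagram J) i
  have hF : HasColimit F := localCohomology.hasColimitDiagram.{0, 0} _ _
  let hc := isColimitOfPreserves ((evaluation _ _).obj M) (colimit.isColimit F)
  obtain ⟨t, y, hy⟩ := Concrete.isColimit_exists_rep _ hc x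
  refine ⟨t, fun t => (colimit.ι F t).app M, y, hy, fun z hz => ?_⟩
  have h0 : (colimit.ι F t).app M z = (colimit.ι F t).app M 0 := by rw [map_zero]; exact hz
  obtain ⟨t', g, g', h⟩ := (Concrete.isColimit_exists_of_rep_eq _ hc z 0) h0
  refine ⟨t', g, fun w => ?_, ?_⟩
  · exact ConcreteCategory.congr_hom (NatTrans.congr_app (colimit.w F g) M) w
  have h2 : (F.map g).app M z = (F.map g').app M 0 := h
  rw [map_zero] at h2
  exact h2

lemma pow_le_annihilator {A : Type} [CommRing A] (J : Ideal A) (t : (ℕᵒᵖ)ᵒᵖ) :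
    J ^ t.unop.unop ≤ Module.annihilator A
      ((localCohomology.ringModIdeals (localCohomology.idealPowersDiagram J)).obj t.unop) := by
  change _ ≤ Module.annihilator A (A ⧸ J ^ t.unop.unop)
  rw [Ideal.annihilator_quotient]

lemma localCohomology_killed {A : Type} [CommRing A] (J : Ideal A) (i : ℕ) (M : ModuleCat.{0} A)
    (x : (localCohomology J i).obj M) (s : A) (hs : s ∈ J) : ∃ t : ℕ, s ^ t • x = 0 := by
  obtain ⟨t, ι, y, rfl, -⟩ := localCohomology_rep J i M x
  refine ⟨t.unop.unop, ?_⟩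
  have h : s ^ t.unop.unop • y = 0 := oldExt_annihilate _ _ i y _
    (pow_le_annihilator J t (Ideal.pow_mem_pow hs _))
  rw [← map_smul, h, map_zero]

lemma localCohomology_regular {A : Type} [CommRing A] [IsDomain A] [IsNoetherianRing A]
    (hA : CMProp A) (j : ℕ) (q : Ideal A) (hq : q.IsPrime) (hj : q.height = j) (s : A) (hs : s ∉ q)
    (x : (localCohomology q j).obj (ModuleCat.of A A)) (hx : s • x = 0) : x = 0 := by
  obtain ⟨t, ι, y, rfl, H⟩ := localCohomology_rep q j _ x
  rw [← map_smul] at hx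
  obtain ⟨t', g, hw, h⟩ := H _ hx
  rw [map_smul] at h
  have : Module.Finite A
      ((localCohomology.ringModIdeals (localCohomology.idealPowersDiagram q)).obj t'.unop) :=
    inferInstanceAs (Module.Finite A (A ⧸ q ^ t'.unop.unop))
  have h0 := oldExt_regular hA j q hq hj s hs t'.unop.unop _ (pow_le_annihilator q t') _ h
  rw [← hw y]
  exact (congrArg (ι t') h0).trans (map_zero _)

end LC

/-- If `p ⊄ q` are primes of `R = k[x₁,…,xₙ]` with heights `i` and `j`, then
`Hom_R(H^i_p(R), H^j_q(R)) = 0`. -/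
theorem stmt_1 (n : ℕ) (k : Type) [Field k]
    (p q : Ideal (MvPolynomial (Fin n) k)) (hp : p.IsPrime) (hq : q.IsPrime)
    (hpq : ¬ p ≤ q) (i j : ℕ)
    (hi : idealHeight p = (i : ℕ∞)) (hj : idealHeight q = (j : ℕ∞)) :
    ∀ f : ((localCohomology p i).obj (ModuleCat.of _ (MvPolynomial (Fin n) k))) →ₗ[MvPolynomial (Fin n) k]
        ((localCohomology q j).obj (ModuleCat.of _ (MvPolynomial (Fin n) k))),
      f = 0 := by
  intro f
  obtain ⟨s, hsp, hsq⟩ := SetLike.not_le_iff_exists.mp hpq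
  rw [idealHeight_prime q hq] at hj
  ext x
  obtain ⟨t, ht⟩ := localCohomology_killed p i _ x s hsp
  refine localCohomology_regular (CMProp.mvPolynomial k n) j q hq hj (s ^ t)
    (fun h => hsq (hq.mem_of_pow_mem _ h)) (f x) ?_
  rw [← map_smul, ht, map_zero]
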